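/- Fix integers n ≥ 2 and d ≥ 4, and set x := ⌈nd/2⌉. Let C ⊂ P^n be a rational normal curve and let S ⊂ C be any set of x points on C. Then h^1(I_{2S}(d)) = 0. -/

import Mathlib

open MvPolynomial

noncomputable section

/-- Projective `n`-space over `k`, as the projectivization of `k^(n+1)`. -/
abbrev ProjSpace (k : Type*) [Field k] (n : ℕ) := Projectivization k (Fin (n+1) → k)

variable (k : Type*) [Field k]

/-- Evaluation at a vector, as a linear map on polynomials. -/
def evalLM {n : ℕ} (v : Fin n → k) : MvPolynomial (Fin n) k →ₗ[k] k :=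
  (MvPolynomial.aeval v).toLinearMap

/-- The submodule of polynomials vanishing together with all first partial derivatives at `v`. -/
def doubleVanishing {n : ℕ} (v : Fin n → k) : Submodule k (MvPolynomial (Fin n) k) :=
  LinearMap.ker (evalLM k v) ⊓
    ⨅ i : Fin n, LinearMap.ker ((evalLM k v).comp (MvPolynomial.pderiv i).toLinearMap)

/-- `h^0(I_{2S}(d))`: dimension of degree-`d` forms vanishing doubly at all points of `S`. -/
def h0 (n d : ℕ) (S : Finset (ProjSpace k n)) : ℕ :=
  Module.finrank k
    ↥(homogeneousSubmodule (Fin (n+1)) k d ⊓ ⨅ p ∈ S, doubleVanishing k p.rep)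

/-- `h^1(I_{2S}(d)) = h^0(I_{2S}(d)) + (n+1)#S - C(n+d,n)`. -/
def h1 (n d : ℕ) (S : Finset (ProjSpace k n)) : ℤ :=
  (h0 k n d S : ℤ) + (n+1) * S.card - (n+d).choose n

/-- `S` spans `P^n`: it is contained in no hyperplane. -/
def Spans (n : ℕ) (S : Finset (ProjSpace k n)) : Prop :=
  Submodule.span k (Projectivization.rep '' (S : Set (ProjSpace k n))) = ⊤

/-- The Terracini locus `T(n,d;x)`. -/
def Terracini (n d x : ℕ) : Set (Finset (ProjSpace k n)) :=
  {S | S.card = x ∧ Spans k n S ∧ 0 < h0 k n d S ∧ 0 < h1 k n d S}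

/-- The minimally Terracini locus `T(n,d;x)'`. -/
def minTerracini (n d x : ℕ) : Set (Finset (ProjSpace k n)) :=
  {S | S ∈ Terracini k n d x ∧ ∀ A : Finset (ProjSpace k n), A ⊂ S → h1 k n d A = 0}

end
/-- The `i`-th coordinate `s^(n-i) t^i` of the standard rational normal curve of degree `n`. -/
def stdRNCvec (k : Type*) [Field k] (n : ℕ) (s t : k) : Fin (n+1) → k :=
  fun i => s ^ (n - (i : ℕ)) * t ^ (i : ℕ)

/-- The standard rational normal curve in `P^n`: the image of
`[s:t] ↦ [s^n : s^(n-1)t : ⋯ : t^n]`. -/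
def stdRNC (k : Type*) [Field k] (n : ℕ) : Set (ProjSpace k n) :=
  {p | ∃ s t : k, (s ≠ 0 ∨ t ≠ 0) ∧
    Projectivization.submodule p = Submodule.span k {stdRNCvec k n s t}}

/-- A rational normal curve in `P^n`: a curve projectively equivalent to the standard one. -/
def IsRNC (k : Type*) [Field k] (n : ℕ) (C : Set (ProjSpace k n)) : Prop :=
  ∃ g : (Fin (n+1) → k) ≃ₗ[k] (Fin (n+1) → k),
    C = {p | ∃ s t : k, (s ≠ 0 ∨ t ≠ 0) ∧
      Projectivization.submodule p = Submodule.span k {g (stdRNCvec k n s t)}}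

/-!
Points on a rational normal curve are in linearly general position, so through any `n` of them
passes a hyperplane that misses a given further one. The double points of `S` impose independent
conditions on forms of degree `d` as soon as, for every `p ∈ S` and every vector `w ≠ 0`, some form
of degree `d` is singular along `S \ {p}` and its jet at `p` pairs nontrivially with `w`. Products
of `d` hyperplanes provide one. If `w` spans the line `p`, the form must not vanish at `p`, and the
`2 (#S - 1) ≤ n d` incidences are distributed over `d` hyperplanes avoiding `p`, each through at
most `n` points. Otherwise one hyperplane passes through `p` and `n - 1` other points without
containing `w`, and the remaining `2 (#S - 1) - (n - 1) ≤ n (d - 1)` incidences are distributed over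
`d - 1` hyperplanes avoiding `p`.
-/

section MultiplicityAtAPoint

variable {R σ : Type*} [CommRing R]

/-- The ideal of the point `v` of affine space. Its powers encode multiplicity:
`F ∈ pointIdeal v ^ m` says that `F` vanishes at `v` to order at least `m`. -/
noncomputable def pointIdeal (v : σ → R) : Ideal (MvPolynomial σ R) :=
  RingHom.ker (eval v)

theorem mem_pointIdeal {v : σ → R} {F : MvPolynomial σ R} : F ∈ pointIdeal v ↔ eval v F = 0 :=
  RingHom.mem_ker

/-- The gradient at `v` of a polynomial, as a linear map. -/
noncomputable def gradAt (v : σ → R) : MvPolynomial σ R →ₗ[R] (σ → R) :=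
  LinearMap.pi fun i => (aeval v).toLinearMap ∘ₗ (pderiv i).toLinearMap

theorem gradAt_apply (v : σ → R) (F : MvPolynomial σ R) (i : σ) :
    gradAt v F i = eval v (pderiv i F) := by
  simp [gradAt, aeval_eq_eval]

theorem gradAt_mul (v : σ → R) (F G : MvPolynomial σ R) :
    gradAt v (F * G) = eval v F • gradAt v G + eval v G • gradAt v F := by
  ext i
  simp [gradAt_apply, Derivation.leibniz]

theorem gradAt_eq_zero_of_mem_pointIdeal_sq {v : σ → R} {F : MvPolynomial σ R}
    (hF : F ∈ pointIdeal v ^ 2) : gradAt v F = 0 := by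
  rw [pow_two] at hF
  induction hF using Submodule.mul_induction_on' with
  | mem_mul_mem G hG H hH =>
    rw [gradAt_mul, mem_pointIdeal.mp hG, mem_pointIdeal.mp hH, zero_smul, zero_smul, add_zero]
  | add G _ H _ hG hH => rw [map_add, hG, hH, add_zero]

theorem gradAt_dotProduct_self [Fintype σ] (v : σ → R) {F : MvPolynomial σ R} {d : ℕ}
    (hF : F.IsHomogeneous d) : gradAt v F ⬝ᵥ v = d * eval v F := by
  have euler := congrArg (eval v) hF.sum_X_mul_pderiv
  simp only [map_sum, map_mul, eval_X, nsmul_eq_mul, map_natCast] at euler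
  simp only [← euler, dotProduct, gradAt_apply, mul_comm]

/-- The first-order jet at `v` of a form of degree `d`, packed into a single vector. The gradient
pairs with `v` to `d * F v` and so forgets the value `F v` when `d` vanishes in `R`; the multiple
of `a`, a covector with `a ⬝ᵥ v = 1`, makes the pairing with `v` equal to `F v`. -/
noncomputable def jetAt (d : ℕ) (a v : σ → R) : MvPolynomial σ R →ₗ[R] (σ → R) :=
  gradAt v + (1 - d : R) • (aeval v).toLinearMap.smulRight a

theorem jetAt_apply (d : ℕ) (a v : σ → R) (F : MvPolynomial σ R) :
    jetAt d a v F = gradAt v F + ((1 - d) * eval v F) • a := by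
  simp [jetAt, aeval_eq_eval, mul_smul]

theorem jetAt_eq_gradAt (d : ℕ) (a : σ → R) {v : σ → R} {F : MvPolynomial σ R}
    (hF : eval v F = 0) : jetAt d a v F = gradAt v F := by
  rw [jetAt_apply, hF, mul_zero, zero_smul, add_zero]

theorem jetAt_eq_zero_of_mem_pointIdeal_sq (d : ℕ) (a : σ → R) {v : σ → R}
    {F : MvPolynomial σ R} (hF : F ∈ pointIdeal v ^ 2) : jetAt d a v F = 0 := by
  rw [jetAt_eq_gradAt d a (mem_pointIdeal.mp (Ideal.pow_le_self two_ne_zero hF)),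
    gradAt_eq_zero_of_mem_pointIdeal_sq hF]

theorem jetAt_dotProduct_self [Fintype σ] {a v : σ → R} (hav : a ⬝ᵥ v = 1)
    {F : MvPolynomial σ R} {d : ℕ} (hF : F.IsHomogeneous d) : jetAt d a v F ⬝ᵥ v = eval v F := by
  rw [jetAt_apply, add_dotProduct, smul_dotProduct, gradAt_dotProduct_self v hF, hav, smul_eq_mul]
  ring

theorem jetAt_eq_zero_iff [Fintype σ] {a v : σ → R} (hav : a ⬝ᵥ v = 1)
    {F : MvPolynomial σ R} {d : ℕ} (hF : F.IsHomogeneous d) :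
    jetAt d a v F = 0 ↔ eval v F = 0 ∧ gradAt v F = 0 := by
  constructor
  · intro hjet
    have hval : eval v F = 0 := by
      rw [← jetAt_dotProduct_self hav hF, hjet, zero_dotProduct]
    exact ⟨hval, by rwa [jetAt_eq_gradAt d a hval] at hjet⟩
  · rintro ⟨hval, hgrad⟩
    rw [jetAt_eq_gradAt d a hval, hgrad]

end MultiplicityAtAPoint

section LinearForm

variable {R σ : Type*} [CommRing R] [Fintype σ] [DecidableEq σ]

/-- The homogeneous polynomial of degree one whose values are those of the functional `f`. -/
noncomputable def linearForm (f : Module.Dual R (σ → R)) : MvPolynomial σ R :=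
  ∑ i, C (f (Pi.single i 1)) * X i

theorem isHomogeneous_linearForm (f : Module.Dual R (σ → R)) : (linearForm f).IsHomogeneous 1 :=
  IsHomogeneous.sum _ _ _ fun _ _ => isHomogeneous_C_mul_X _ _

theorem eval_linearForm (f : Module.Dual R (σ → R)) (v : σ → R) : eval v (linearForm f) = f v := by
  conv_rhs => rw [← Finset.univ_sum_single v, map_sum]
  rw [linearForm, map_sum]
  refine Finset.sum_congr rfl fun i _ => ?_
  rw [map_mul, eval_C, eval_X, mul_comm, ← smul_eq_mul, ← map_smul, ← Pi.single_smul, smul_eq_mul,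
    mul_one]

theorem gradAt_linearForm_dotProduct (v : σ → R) (f : Module.Dual R (σ → R)) (w : σ → R) :
    gradAt v (linearForm f) ⬝ᵥ w = f w := by
  have hgrad : ∀ i, gradAt v (linearForm f) i = f (Pi.single i 1) := fun i => by
    simp [gradAt_apply, linearForm, pderiv_X, Pi.single_apply]
  rw [← eval_linearForm f w]
  simp only [dotProduct, hgrad]
  simp [linearForm]

theorem mul_linearForm_mem_pointIdeal_pow {v : σ → R} {G : MvPolynomial σ R}
    {f : Module.Dual R (σ → R)} {m e : ℕ} {P : Prop} [Decidable P] (hG : G ∈ pointIdeal v ^ m)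
    (hf : P → f v = 0) (he : e ≤ m + if P then 1 else 0) :
    G * linearForm f ∈ pointIdeal v ^ e := by
  refine Ideal.pow_le_pow_right he ?_
  split_ifs with hP
  · rw [pow_succ]
    exact Ideal.mul_mem_mul hG (mem_pointIdeal.mpr (by rw [eval_linearForm, hf hP]))
  · exact Ideal.mul_mem_right _ _ hG

end LinearForm

section LinearlyGeneralPosition

variable {k V ι : Type*} [Field k] [AddCommGroup V] [Module k V]

variable (k) in
/-- The vectors `v i`, `i ∈ S`, are in linearly general position: as many of them as the dimension
of `V` allows are always linearly independent. -/
def InLinearlyGeneralPosition (v : ι → V) (S : Finset ι) : Prop :=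
  ∀ T ⊆ S, T.card ≤ Module.finrank k V → LinearIndepOn k v (T : Set ι)

theorem InLinearlyGeneralPosition.exists_dual {v : ι → V} {S : Finset ι}
    (hS : InLinearlyGeneralPosition k v S) {p : ι} (hp : p ∈ S) {T : Finset ι} (hTS : T ⊆ S)
    (hpT : p ∉ T) (hT : T.card < Module.finrank k V) :
    ∃ f : Module.Dual k V, f (v p) ≠ 0 ∧ ∀ q ∈ T, f (v q) = 0 := by
  classical
  have hind : LinearIndepOn k v (insert p (T : Set ι)) := by
    rw [← Finset.coe_insert]
    exact hS _ (Finset.insert_subset hp hTS) (by rw [Finset.card_insert_of_notMem hpT]; exact hT)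
  obtain ⟨f, hfp, hfT⟩ := Submodule.exists_le_ker_of_notMem
    (hind.notMem_span_of_insert (Finset.mem_coe.not.mpr hpT))
  exact ⟨f, hfp, fun q hq => hfT (Submodule.subset_span (Set.mem_image_of_mem v hq))⟩

theorem exists_subset_notMem_span_insert [DecidableEq ι] {v : ι → V} {p : ι} {T : Finset ι}
    (hT : LinearIndepOn k v (insert p T : Finset ι)) {w : V} (hw : w ∉ Submodule.span k {v p}) :
    ∃ Q ⊆ T, T.card ≤ Q.card + 1 ∧
      w ∉ Submodule.span k (v '' (insert p Q : Finset ι)) := by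
  by_cases hwT : w ∈ Submodule.span k (v '' (insert p T : Finset ι))
  swap
  · exact ⟨T, subset_rfl, Nat.le_succ _, hwT⟩
  obtain ⟨l, hl, rfl⟩ := (Finsupp.mem_span_image_iff_linearCombination k).mp hwT
  obtain ⟨q, hlq, hqp⟩ : ∃ q, l q ≠ 0 ∧ q ≠ p := by
    by_contra! hsupp
    refine hw (Set.image_singleton (f := v) ▸
      (Finsupp.mem_span_image_iff_linearCombination k).mpr ⟨l, fun q hq => ?_, rfl⟩)
    exact hsupp q (Finsupp.mem_support_iff.mp hq)
  refine ⟨T.erase q, Finset.erase_subset _ _,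
    Nat.sub_le_iff_le_add.mp Finset.pred_card_le_card_erase, fun hwQ => hlq ?_⟩
  obtain ⟨l', hl', hl'l⟩ := (Finsupp.mem_span_image_iff_linearCombination k).mp hwQ
  have hQT : (insert p (T.erase q) : Finset ι) ⊆ insert p T :=
    Finset.insert_subset_insert p (Finset.erase_subset q T)
  have hl'_eq : l' = l := sub_eq_zero.mp <| linearIndepOn_iff.mp hT (l' - l)
    (Submodule.sub_mem _ (Finsupp.supported_mono (Finset.coe_subset.mpr hQT) hl') hl)
    (by rw [map_sub, hl'l, sub_self])
  rw [← hl'_eq]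
  refine Finsupp.notMem_support_iff.mp fun hq => ?_
  have hqQ : q ∈ insert p (T.erase q) := hl' hq
  simp [hqp] at hqQ

end LinearlyGeneralPosition

theorem sum_tsub_ite_mem_add_card {ι : Type*} [DecidableEq ι] {A T : Finset ι} {μ : ι → ℕ}
    (hT : T ⊆ A) (hμ : ∀ q ∈ T, μ q ≠ 0) :
    ∑ q ∈ A, (μ q - if q ∈ T then 1 else 0) + T.card = ∑ q ∈ A, μ q := by
  have hcard : T.card = ∑ q ∈ A, if q ∈ T then 1 else 0 := by
    rw [Finset.sum_ite_mem, Finset.inter_eq_right.mpr hT, Finset.card_eq_sum_ones]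
  rw [hcard, ← Finset.sum_add_distrib]
  refine Finset.sum_congr rfl fun q _ => Nat.sub_add_cancel ?_
  split_ifs with hqT
  · exact Nat.one_le_iff_ne_zero.mpr (hμ q hqT)
  · exact Nat.zero_le _

theorem card_filter_eq_succ_le_of_sum_le {ι : Type*} {A : Finset ι} {μ : ι → ℕ} {n m : ℕ}
    (hsum : ∑ q ∈ A, μ q ≤ n * (m + 1)) : (A.filter (μ · = m + 1)).card ≤ n := by
  refine Nat.le_of_mul_le_mul_right ?_ m.succ_pos
  calc (A.filter (μ · = m + 1)).card * (m + 1) ≤ ∑ q ∈ A.filter (μ · = m + 1), μ q :=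
        Finset.card_nsmul_le_sum _ μ (m + 1) fun q hq => (Finset.mem_filter.mp hq).2.ge
    _ ≤ ∑ q ∈ A, μ q := Finset.sum_le_sum_of_subset (Finset.filter_subset _ _)
    _ ≤ n * (m + 1) := hsum

/- `T` contains all `q` of full multiplicity `m + 1` and is then enlarged inside the support of `μ`
until it has `n` elements or exhausts the support. -/
theorem exists_layer_of_sum_le {ι : Type*} [DecidableEq ι] {A : Finset ι} {μ : ι → ℕ} {n m : ℕ}
    (hμ : ∀ q ∈ A, μ q ≤ m + 1) (hsum : ∑ q ∈ A, μ q ≤ n * (m + 1)) :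
    ∃ T ⊆ A, ∃ ν : ι → ℕ, T.card ≤ n ∧ (∀ q ∈ A, ν q ≤ m) ∧ ∑ q ∈ A, ν q ≤ n * m ∧
      ∀ q ∈ A, μ q ≤ ν q + if q ∈ T then 1 else 0 := by
  have hfull_subset : A.filter (μ · = m + 1) ⊆ A.filter (μ · ≠ 0) :=
    Finset.monotone_filter_right A fun q _ hq => by omega
  obtain ⟨T, hfullT, hT, hTcard⟩ := Finset.exists_subsuperset_card_eq hfull_subset
    (le_min (card_filter_eq_succ_le_of_sum_le hsum) (Finset.card_le_card hfull_subset))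
    (min_le_right n _)
  have hTA : T ⊆ A := hT.trans (Finset.filter_subset _ _)
  have hTn : T.card ≤ n := hTcard.trans_le (min_le_left _ _)
  let ν : ι → ℕ := fun q => μ q - if q ∈ T then 1 else 0
  have hν : ∀ q ∈ A, ν q ≤ m := fun q hq => by
    by_cases hqT : q ∈ T
    · simpa [ν, hqT] using hμ q hq
    · have hne : μ q ≠ m + 1 := fun h => hqT (hfullT (Finset.mem_filter.mpr ⟨hq, h⟩))
      simpa [ν, hqT] using Nat.lt_succ_iff.mp ((hμ q hq).lt_of_ne hne)
  refine ⟨T, hTA, ν, hTn, hν, ?_, fun q _ => le_tsub_add⟩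
  rcases min_choice n (A.filter (μ · ≠ 0)).card with hmin | hmin
  · have hνμ := sum_tsub_ite_mem_add_card hTA fun q hq => (Finset.mem_filter.mp (hT hq)).2
    rw [← hνμ, hTcard, hmin, mul_add_one] at hsum
    exact Nat.le_of_add_le_add_right hsum
  · have hTsupp : T = A.filter (μ · ≠ 0) :=
      Finset.eq_of_subset_of_card_le hT (hTcard.trans hmin).ge
    have hν_zero : ∀ q ∈ A, q ∉ T → ν q = 0 := fun q hq hqT => by
      have hμq : μ q = 0 := by simpa [hTsupp, hq] using hqT
      simp [ν, hμq]
    calc ∑ q ∈ A, ν q = ∑ q ∈ T, ν q := (Finset.sum_subset hTA hν_zero).symm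
      _ ≤ T.card * m := Finset.sum_le_card_nsmul _ _ _ fun q hq => hν q (hTA hq)
      _ ≤ n * m := Nat.mul_le_mul_right m hTn

section FormsWithPrescribedMultiplicities

variable {k ι : Type*} [Field k] {n : ℕ} {v : ι → Fin (n + 1) → k} {S : Finset ι}

theorem InLinearlyGeneralPosition.exists_form_of_sum_le [DecidableEq ι]
    (hS : InLinearlyGeneralPosition k v S) {p : ι} (hp : p ∈ S) (m : ℕ) (μ : ι → ℕ)
    (hμ : ∀ q ∈ S.erase p, μ q ≤ m) (hsum : ∑ q ∈ S.erase p, μ q ≤ n * m) :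
    ∃ G : MvPolynomial (Fin (n + 1)) k, G.IsHomogeneous m ∧ eval (v p) G ≠ 0 ∧
      ∀ q ∈ S.erase p, G ∈ pointIdeal (v q) ^ μ q := by
  induction m generalizing μ with
  | zero =>
    refine ⟨1, isHomogeneous_one _ _, by simp, fun q hq => ?_⟩
    rw [Nat.le_zero.mp (hμ q hq), pow_zero, Ideal.one_eq_top]
    exact Submodule.mem_top
  | succ m ih =>
    obtain ⟨T, hTA, ν, hTn, hν, hνsum, hμν⟩ := exists_layer_of_sum_le hμ hsum
    obtain ⟨G, hG, hGp, hGν⟩ := ih ν hν hνsum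
    obtain ⟨f, hfp, hfT⟩ := hS.exists_dual hp (hTA.trans (Finset.erase_subset _ _))
      (fun hpT => Finset.notMem_erase p S (hTA hpT)) (by simpa [Nat.lt_succ_iff] using hTn)
    refine ⟨G * linearForm f, hG.mul (isHomogeneous_linearForm f), ?_, fun q hq => ?_⟩
    · rw [map_mul, eval_linearForm]
      exact mul_ne_zero hGp hfp
    · exact mul_linearForm_mem_pointIdeal_pow (hGν q hq) (hfT q) (hμν q hq)

theorem InLinearlyGeneralPosition.exists_form_eval_ne_zero [DecidableEq ι]
    (hS : InLinearlyGeneralPosition k v S) {p : ι} (hp : p ∈ S) {d : ℕ} (hd : 2 ≤ d)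
    (hcard : 2 * S.card ≤ n * d + 2) :
    ∃ F : MvPolynomial (Fin (n + 1)) k, F.IsHomogeneous d ∧ eval (v p) F ≠ 0 ∧
      ∀ q ∈ S.erase p, F ∈ pointIdeal (v q) ^ 2 :=
  hS.exists_form_of_sum_le hp d (fun _ => 2) (fun _ _ => hd) (by
    rw [Finset.sum_const, Finset.card_erase_of_mem hp, smul_eq_mul]
    omega)

/- `F` is a linear form vanishing at `v p` but not at `w`, times a form that does not vanish at
`v p`. The linear form passes through as many of the other points as possible, which lowers the
multiplicities that the other factor has to carry. -/
theorem InLinearlyGeneralPosition.exists_form_gradAt_dotProduct_ne_zero [DecidableEq ι]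
    (hS : InLinearlyGeneralPosition k v S) {p : ι} (hp : p ∈ S) {d : ℕ} (hd : 3 ≤ d)
    (hcard : 2 * S.card ≤ n * d + 1) {w : Fin (n + 1) → k} (hw : w ∉ Submodule.span k {v p}) :
    ∃ F : MvPolynomial (Fin (n + 1)) k, F.IsHomogeneous d ∧ eval (v p) F = 0 ∧
      gradAt (v p) F ⬝ᵥ w ≠ 0 ∧ ∀ q ∈ S.erase p, F ∈ pointIdeal (v q) ^ 2 := by
  obtain ⟨T, hTS, hTcard⟩ := Finset.exists_subset_card_eq (min_le_right n (S.erase p).card)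
  have hpT : p ∉ T := fun h => Finset.notMem_erase p S (hTS h)
  have hTind : LinearIndepOn k v (insert p T : Finset ι) := by
    refine hS _ (Finset.insert_subset hp (hTS.trans (Finset.erase_subset _ _))) ?_
    rw [Finset.card_insert_of_notMem hpT, Module.finrank_fin_fun]
    omega
  obtain ⟨Q, hQT, hQcard, hwQ⟩ := exists_subset_notMem_span_insert hTind hw
  obtain ⟨f, hfw, hfQ⟩ := Submodule.exists_le_ker_of_notMem hwQ
  have hf : ∀ q ∈ insert p Q, f (v q) = 0 := fun q hq =>
    hfQ (Submodule.subset_span (Set.mem_image_of_mem v hq))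
  obtain ⟨m, rfl⟩ : ∃ m, d = m + 1 := ⟨d - 1, by omega⟩
  have hdegree : ∑ q ∈ S.erase p, (2 - if q ∈ Q then 1 else 0) ≤ n * m := by
    have hsum := sum_tsub_ite_mem_add_card (μ := fun _ => 2) (hQT.trans hTS)
      fun _ _ => two_ne_zero
    rw [Finset.sum_const, smul_eq_mul] at hsum
    have hSp := Finset.card_erase_add_one hp
    have hnm : n * 2 ≤ n * m := Nat.mul_le_mul_left n (by omega)
    rw [mul_add] at hcard
    omega
  obtain ⟨G, hG, hGp, hGmem⟩ := hS.exists_form_of_sum_le hp m (fun q => 2 - if q ∈ Q then 1 else 0)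
    (fun q _ => (Nat.sub_le _ _).trans (by omega)) hdegree
  have hfp : eval (v p) (linearForm f) = 0 := by
    rw [eval_linearForm, hf p (Finset.mem_insert_self _ _)]
  refine ⟨G * linearForm f, hG.mul (isHomogeneous_linearForm f), ?_, ?_, fun q hq => ?_⟩
  · rw [map_mul, hfp, mul_zero]
  · rw [gradAt_mul, hfp, zero_smul, add_zero, smul_dotProduct, gradAt_linearForm_dotProduct]
    exact mul_ne_zero hGp hfw
  · exact mul_linearForm_mem_pointIdeal_pow (hGmem q hq)
      (fun hqQ => hf q (Finset.mem_insert_of_mem hqQ)) le_tsub_add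

theorem InLinearlyGeneralPosition.exists_form_jetAt_dotProduct_ne_zero [DecidableEq ι]
    (hS : InLinearlyGeneralPosition k v S) {p : ι} (hp : p ∈ S) {d : ℕ} (hd : 3 ≤ d)
    (hcard : 2 * S.card ≤ n * d + 1) {a : Fin (n + 1) → k} (ha : a ⬝ᵥ v p = 1)
    {w : Fin (n + 1) → k} (hw : w ≠ 0) :
    ∃ F : MvPolynomial (Fin (n + 1)) k, F.IsHomogeneous d ∧ jetAt d a (v p) F ⬝ᵥ w ≠ 0 ∧
      ∀ q ∈ S.erase p, F ∈ pointIdeal (v q) ^ 2 := by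
  by_cases hwp : w ∈ Submodule.span k {v p}
  · obtain ⟨c, rfl⟩ := Submodule.mem_span_singleton.mp hwp
    obtain ⟨F, hF, hFp, hFmem⟩ := hS.exists_form_eval_ne_zero hp (by omega : 2 ≤ d) (by omega)
    refine ⟨F, hF, ?_, hFmem⟩
    rw [dotProduct_smul, jetAt_dotProduct_self ha hF]
    exact smul_ne_zero (left_ne_zero_of_smul hw) hFp
  · obtain ⟨F, hF, hFp, hFw, hFmem⟩ :=
      hS.exists_form_gradAt_dotProduct_ne_zero hp hd hcard hwp
    exact ⟨F, hF, by rwa [jetAt_eq_gradAt d a hFp], hFmem⟩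

end FormsWithPrescribedMultiplicities

section DoublePoints

variable {k : Type*} [Field k] {n : ℕ}

theorem finrank_homogeneousSubmodule_fin_succ (n d : ℕ) :
    Module.finrank k (homogeneousSubmodule (Fin (n + 1)) k d) = (n + d).choose n := by
  have hsupp : {x : Fin (n + 1) →₀ ℕ | x.degree = d}
      = Finset.finsuppAntidiag (Finset.univ : Finset (Fin (n + 1))) d := by
    ext x
    simp [Finset.mem_finsuppAntidiag, Finsupp.degree_eq_sum]
  rw [show homogeneousSubmodule (Fin (n + 1)) k d = restrictSupport k {x | x.degree = d} from
      homogeneousSubmodule_eq_finsupp_supported _ _ d,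
    Module.finrank_eq_nat_card_basis (basisRestrictSupport k _), hsupp]
  simp only [SetLike.coe_sort_coe, Nat.card_eq_fintype_card, Fintype.card_coe,
    Finset.card_finsuppAntidiag_nat_eq_choose, Finset.card_univ, Fintype.card_fin]
  rw [Nat.succ_add_sub_one, Nat.choose_symm_add]

theorem mem_doubleVanishing_iff {N : ℕ} {v : Fin N → k} {F : MvPolynomial (Fin N) k} :
    F ∈ doubleVanishing k v ↔ eval v F = 0 ∧ gradAt v F = 0 := by
  simp [doubleVanishing, evalLM, aeval_eq_eval, funext_iff, gradAt_apply]

/-- The jets at the points `v p`, `p ∈ S`, of forms of degree `d`, with the normalising covectors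
`a p` of `jetAt`. -/
noncomputable def jets {ι : Type*} (S : Finset ι) (v a : ι → Fin (n + 1) → k) (d : ℕ) :
    homogeneousSubmodule (Fin (n + 1)) k d →ₗ[k] (S → Fin (n + 1) → k) :=
  (LinearMap.pi fun p : S => jetAt d (a p) (v p)) ∘ₗ Submodule.subtype _

/- By duality it suffices that a nonzero functional on the target, which has a nonzero component
at some `p`, does not annihilate all jets; a form singular at the remaining points detects it. -/
theorem InLinearlyGeneralPosition.jets_surjective {ι : Type*} {v : ι → Fin (n + 1) → k}
    {S : Finset ι} (hS : InLinearlyGeneralPosition k v S) {d : ℕ} (hd : 3 ≤ d)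
    (hcard : 2 * S.card ≤ n * d + 1) {a : ι → Fin (n + 1) → k} (ha : ∀ p ∈ S, a p ⬝ᵥ v p = 1) :
    Function.Surjective (jets S v a d) := by
  classical
  rw [← LinearMap.dualMap_injective_iff, injective_iff_map_eq_zero]
  refine fun φ hφ => LinearMap.pi_ext' fun p => ?_
  obtain ⟨w, hw⟩ := (dotProductEquiv k (Fin (n + 1))).surjective
    (φ ∘ₗ LinearMap.single k (fun _ => Fin (n + 1) → k) p)
  suffices w = 0 by rw [← hw, this, map_zero, LinearMap.zero_comp]
  by_contra hw0
  obtain ⟨F, hF, hFw, hFmem⟩ :=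
    hS.exists_form_jetAt_dotProduct_ne_zero p.2 hd hcard (ha p p.2) hw0
  have hjets : jets S v a d ⟨F, hF⟩ = Pi.single p (jetAt d (a p) (v p) F) := by
    ext1 q
    rcases eq_or_ne q p with rfl | hqp
    · rw [Pi.single_eq_same]
      rfl
    · rw [Pi.single_eq_of_ne hqp]
      exact jetAt_eq_zero_of_mem_pointIdeal_sq d _
        (hFmem q (Finset.mem_erase.mpr ⟨Subtype.coe_ne_coe.mpr hqp, q.2⟩))
  apply hFw
  calc jetAt d (a p) (v p) F ⬝ᵥ w = φ (Pi.single p (jetAt d (a p) (v p) F)) := by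
        rw [dotProduct_comm]
        exact LinearMap.congr_fun hw _
    _ = φ (jets S v a d ⟨F, hF⟩) := by rw [hjets]
    _ = 0 := LinearMap.congr_fun hφ _

theorem h0_eq_finrank_ker_jets {S : Finset (ProjSpace k n)} {a : ProjSpace k n → Fin (n + 1) → k}
    (ha : ∀ p ∈ S, a p ⬝ᵥ p.rep = 1) (d : ℕ) :
    h0 k n d S = Module.finrank k (LinearMap.ker (jets S Projectivization.rep a d)) := by
  have hmap : homogeneousSubmodule (Fin (n + 1)) k d ⊓ ⨅ p ∈ S, doubleVanishing k p.rep =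
      (LinearMap.ker (jets S Projectivization.rep a d)).map (Submodule.subtype _) := by
    ext F
    simp only [Submodule.mem_inf, Submodule.mem_iInf, Submodule.mem_map, LinearMap.mem_ker,
      Submodule.subtype_apply, Subtype.exists, exists_and_right, exists_eq_right]
    rw [← exists_prop]
    refine exists_congr fun hF => ?_
    rw [funext_iff, Subtype.forall]
    exact forall₂_congr fun p hp =>
      mem_doubleVanishing_iff.trans (jetAt_eq_zero_iff (ha p hp) hF).symm
  rw [h0, hmap, Submodule.finrank_map_subtype_eq]

theorem exists_dotProduct_rep_eq_one (p : ProjSpace k n) : ∃ a, a ⬝ᵥ p.rep = 1 := by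
  obtain ⟨i, hi⟩ := Function.ne_iff.mp p.rep_nonzero
  exact ⟨Pi.single i (p.rep i)⁻¹, by rw [single_dotProduct, inv_mul_cancel₀ hi]⟩

theorem InLinearlyGeneralPosition.h1_eq_zero {S : Finset (ProjSpace k n)}
    (hS : InLinearlyGeneralPosition k Projectivization.rep S) {d : ℕ} (hd : 3 ≤ d)
    (hcard : 2 * S.card ≤ n * d + 1) : h1 k n d S = 0 := by
  choose a ha using exists_dotProduct_rep_eq_one (k := k) (n := n)
  have : Module.Finite k (homogeneousSubmodule (Fin (n + 1)) k d) :=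
    Module.Finite.iff_fg.mpr (homogeneousSubmodule_fg _ _ d)
  have hrank := LinearMap.finrank_range_add_finrank_ker (jets S Projectivization.rep a d)
  rw [LinearMap.range_eq_top.mpr (hS.jets_surjective hd hcard fun p _ => ha p), finrank_top,
    Module.finrank_pi_fintype, finrank_homogeneousSubmodule_fin_succ,
    ← h0_eq_finrank_ker_jets fun p _ => ha p] at hrank
  simp only [Module.finrank_fin_fun, Finset.sum_const, Finset.card_univ, Fintype.card_coe,
    smul_eq_mul] at hrank
  rw [h1, ← hrank]
  push_cast
  ring

end DoublePoints

section RationalNormalCurve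

variable {k : Type*} [Field k]

theorem stdRNCvec_mul_mul (n : ℕ) (e s t : k) :
    stdRNCvec k n (e * s) (e * t) = e ^ n • stdRNCvec k n s t := by
  ext i
  rw [Pi.smul_apply, smul_eq_mul, stdRNCvec, stdRNCvec, mul_pow, mul_pow,
    ← pow_sub_mul_pow e (Nat.lt_succ_iff.mp i.2)]
  ring

theorem stdRNCvec_succ_comp_castSucc (n : ℕ) (s t : k) :
    stdRNCvec k (n + 1) s t ∘ Fin.castSucc = s • stdRNCvec k n s t := by
  ext i
  simp only [stdRNCvec, Function.comp_apply, Pi.smul_apply, smul_eq_mul, Fin.val_castSucc,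
    Nat.succ_sub (Nat.lt_succ_iff.mp i.2), pow_succ]
  ring

theorem stdRNCvec_succ_comp_succ (n : ℕ) (s t : k) :
    stdRNCvec k (n + 1) s t ∘ Fin.succ = t • stdRNCvec k n s t := by
  ext i
  simp only [stdRNCvec, Function.comp_apply, Pi.smul_apply, smul_eq_mul, Fin.val_succ,
    Nat.add_sub_add_right, pow_succ]
  ring

/- Functionals on `k ^ (n + 1)` restrict to the curve as binary forms of degree `n`; this multiplies
such a form by the linear binary form `α * s + β * t`. -/
theorem exists_dual_stdRNCvec_succ {n : ℕ} (φ : Module.Dual k (Fin (n + 1) → k)) (α β : k) :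
    ∃ ψ : Module.Dual k (Fin (n + 2) → k), ∀ s t,
      ψ (stdRNCvec k (n + 1) s t) = (α * s + β * t) * φ (stdRNCvec k n s t) := by
  refine ⟨α • φ ∘ₗ LinearMap.funLeft k k Fin.castSucc + β • φ ∘ₗ LinearMap.funLeft k k Fin.succ,
    fun s t => ?_⟩
  simp only [LinearMap.add_apply, LinearMap.smul_apply, LinearMap.comp_apply, LinearMap.funLeft,
    LinearMap.coe_mk, AddHom.coe_mk, stdRNCvec_succ_comp_castSucc, stdRNCvec_succ_comp_succ,
    map_smul, smul_eq_mul]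
  ring

theorem exists_dual_stdRNCvec_ne_zero {ι : Type*} {s t : ι → k} {p : ι} (hp : s p ≠ 0 ∨ t p ≠ 0)
    {n : ℕ} {T : Finset ι} (hT : ∀ q ∈ T, t q * s p - s q * t p ≠ 0) (hTn : T.card ≤ n) :
    ∃ φ : Module.Dual k (Fin (n + 1) → k), φ (stdRNCvec k n (s p) (t p)) ≠ 0 ∧
      ∀ q ∈ T, φ (stdRNCvec k n (s q) (t q)) = 0 := by
  classical
  induction n generalizing T with
  | zero =>
    rw [Finset.card_eq_zero.mp (Nat.le_zero.mp hTn)]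
    exact ⟨LinearMap.proj 0, by simp [stdRNCvec], by simp⟩
  | succ n ih =>
    rcases T.eq_empty_or_nonempty with rfl | ⟨r, hr⟩
    · obtain ⟨φ, hφp, -⟩ := ih hT (Nat.zero_le n)
      obtain ⟨α, β, hαβ⟩ : ∃ α β : k, α * s p + β * t p ≠ 0 :=
        hp.elim (fun h => ⟨1, 0, by simpa using h⟩) fun h => ⟨0, 1, by simpa using h⟩
      obtain ⟨ψ, hψ⟩ := exists_dual_stdRNCvec_succ φ α β
      exact ⟨ψ, by rw [hψ]; exact mul_ne_zero hαβ hφp, by simp⟩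
    · obtain ⟨φ, hφp, hφT⟩ := ih (T := T.erase r) (fun q hq => hT q (Finset.mem_of_mem_erase hq))
        (by rw [Finset.card_erase_of_mem hr]; omega)
      obtain ⟨ψ, hψ⟩ := exists_dual_stdRNCvec_succ φ (t r) (-s r)
      refine ⟨ψ, ?_, fun q hq => ?_⟩
      · rw [hψ, neg_mul, ← sub_eq_add_neg]
        exact mul_ne_zero (hT r hr) hφp
      · rw [hψ]
        rcases eq_or_ne q r with rfl | hqr
        · ring
        · rw [hφT q (Finset.mem_erase.mpr ⟨hqr, hq⟩), mul_zero]

theorem exists_eq_mul_of_mul_sub_mul_eq_zero {s t s' t' : k} (h : s ≠ 0 ∨ t ≠ 0)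
    (h' : s' ≠ 0 ∨ t' ≠ 0) (hdet : t' * s - s' * t = 0) :
    ∃ e ≠ 0, s = e * s' ∧ t = e * t' := by
  rcases h' with hs' | ht'
  · have ht : t = s / s' * t' := by
      field_simp
      linear_combination -hdet
    have hs : s ≠ 0 := fun hs => by simp [hs, ht] at h
    exact ⟨s / s', div_ne_zero hs hs', (div_mul_cancel₀ s hs').symm, ht⟩
  · have hs : s = t / t' * s' := by
      field_simp
      linear_combination hdet
    have ht : t ≠ 0 := fun ht => by simp [hs, ht] at h
    exact ⟨t / t', div_ne_zero ht ht', hs, (div_mul_cancel₀ t ht').symm⟩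

theorem span_stdRNCvec_eq {n : ℕ} (g : (Fin (n + 1) → k) ≃ₗ[k] (Fin (n + 1) → k))
    {s t s' t' : k} (h : s ≠ 0 ∨ t ≠ 0) (h' : s' ≠ 0 ∨ t' ≠ 0) (hdet : t' * s - s' * t = 0) :
    Submodule.span k {g (stdRNCvec k n s t)} = Submodule.span k {g (stdRNCvec k n s' t')} := by
  obtain ⟨e, he, rfl, rfl⟩ := exists_eq_mul_of_mul_sub_mul_eq_zero h h' hdet
  rw [stdRNCvec_mul_mul, map_smul]
  exact Submodule.span_singleton_smul_eq (pow_ne_zero n he).isUnit _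

theorem IsRNC.inLinearlyGeneralPosition {n : ℕ} {C : Set (ProjSpace k n)} (hC : IsRNC k n C)
    {S : Finset (ProjSpace k n)} (hS : ↑S ⊆ C) :
    InLinearlyGeneralPosition k Projectivization.rep S := by
  classical
  obtain ⟨g, rfl⟩ := hC
  choose! s t hst hspan using fun p (hp : p ∈ S) => hS hp
  intro T hTS hT
  rw [Module.finrank_fin_fun] at hT
  refine linearIndepOn_iff_notMem_span.mpr fun p hp hmem => ?_
  have hdet : ∀ q ∈ T.erase p, t q * s p - s q * t p ≠ 0 := fun q hq hdet => by
    obtain ⟨hqp, hq⟩ := Finset.mem_erase.mp hq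
    refine hqp (Projectivization.submodule_injective ?_)
    rw [hspan p (hTS hp), hspan q (hTS hq)]
    exact (span_stdRNCvec_eq g (hst p (hTS hp)) (hst q (hTS hq)) hdet).symm
  obtain ⟨φ, hφp, hφT⟩ := exists_dual_stdRNCvec_ne_zero (hst p (hTS hp)) hdet
    (n := n) (by rw [Finset.card_erase_of_mem hp]; omega)
  let ψ : Module.Dual k (Fin (n + 1) → k) := φ ∘ₗ g.symm
  have hrep : ∀ q ∈ T, q.rep ∈ LinearMap.ker ψ ↔ φ (stdRNCvec k n (s q) (t q)) = 0 := by
    intro q hq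
    rw [← Submodule.span_singleton_le_iff_mem, ← Projectivization.submodule_eq,
      hspan q (hTS hq), Submodule.span_singleton_le_iff_mem]
    simp [ψ]
  refine hφp ((hrep p hp).mp (Submodule.span_le.mpr ?_ hmem))
  rintro _ ⟨q, ⟨hq, hqp⟩, rfl⟩
  exact (hrep q hq).mpr (hφT q (Finset.mem_erase.mpr ⟨hqp, hq⟩))

end RationalNormalCurve

theorem rnc_points_h1_eq_zero_general {k : Type*} [Field k] {n d : ℕ} (hd : 3 ≤ d)
    {C : Set (ProjSpace k n)} (hC : IsRNC k n C) {S : Finset (ProjSpace k n)} (hS : ↑S ⊆ C)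
    (hcard : 2 * S.card ≤ n * d + 1) : h1 k n d S = 0 :=
  (hC.inLinearlyGeneralPosition hS).h1_eq_zero hd hcard

/-- Lemma: for `n ≥ 2`, `d ≥ 4`, any set of `⌈nd/2⌉` points on a rational normal curve
of `P^n` satisfies `h^1(I_{2S}(d)) = 0`. -/
theorem rnc_points_h1_eq_zero
    (k : Type*) [Field k] [IsAlgClosed k] [CharZero k]
    (n d : ℕ) (hn : 2 ≤ n) (hd : 4 ≤ d)
    (C : Set (ProjSpace k n)) (hC : IsRNC k n C)
    (S : Finset (ProjSpace k n)) (hS : ↑S ⊆ C) (hcard : S.card = (n * d + 1) / 2) :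
    h1 k n d S = 0 := by
  exact rnc_points_h1_eq_zero_general (by omega) hC hS (by omega)
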